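/- Integration by parts formula for the wetting measure with a strip (Proposition 3.1, with the correct free-endpoint boundary term): for every f ∈ C¹_b(ℝ^N) and every h ∈ ℝ^N (with the conventions h_0 := 0 and h_{N+1} := 0), the map b ↦ σ^N_i(f|b) is continuously differentiable on [0,∞) for each i, and ∫_{ℝ₊^N} ∂_h f(φ) ℙ^f_{φ_a,N}(dφ) = Σ_{i=1}^N h_i ( ∫_0^a e^{φ_a(b)} (d/db) σ^N_i(f|b) db − σ^N_i(f|a) ) − ∫_{ℝ₊^N} f(φ) [ Σ_{i=1}^N φ_i (h_{i+1} + h_{i−1} − 2h_i) + φ_N h_N ] ℙ^f_{φ_a,N}(dφ). -/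

import Mathlib

open MeasureTheory

noncomputable section

/-- Extension of a configuration `φ ∈ ℝ^N` (indexed so that `φ ⟨i-1,_⟩` is the paper's `φ_i`,
`1 ≤ i ≤ N`) to all of `ℕ`, with the conventions `φ_0 = 0` and `φ_j = 0` for `j > N`. -/
def pad {N : ℕ} (φ : Fin N → ℝ) : ℕ → ℝ :=
  fun j => if hj : 1 ≤ j ∧ j ≤ N then φ ⟨j - 1, by omega⟩ else 0

/-- The Gaussian gradient weight `ρ(φ) = exp(−Σ_{i=0}^{N−1} (φ_{i+1} − φ_i)²/2)`, `φ_0 = 0`. -/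
def gaussianWeight {N : ℕ} (φ : Fin N → ℝ) : ℝ :=
  Real.exp (-∑ j ∈ Finset.range N, (pad φ (j + 1) - pad φ j) ^ 2 / 2)

/-- The wetting measure with a strip: the measure on `ℝ₊^N` with density
`Z⁻¹ ρ(φ) ∏_{i=1}^N e^{φa(φ_i)}` with respect to Lebesgue measure on `ℝ₊^N`. -/
def wettingMeasure (N : ℕ) (φa : ℝ → ℝ) (Z : ℝ) : Measure (Fin N → ℝ) :=
  (Measure.pi fun _ : Fin N => volume.restrict (Set.Ici 0)).withDensity
    fun φ => ENNReal.ofReal (Z⁻¹ * (gaussianWeight φ * ∏ i, Real.exp (φa (φ i))))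

instance (N : ℕ) (i : Fin N) (b : ℝ) (n : Fin N) :
    SigmaFinite (if n = i then Measure.dirac b else volume.restrict (Set.Ici 0)) := by
  split <;> infer_instance

/-- The conditioned quantity
`σ^N_i(f|b) = Z⁻¹ ∫ f(φ) ρ(φ) ∏_{n≠i} e^{φa(φ_n)} dφ_n` with `φ_i = b`, realized as an
integral against the product of the Dirac mass at `b` in coordinate `i` and Lebesgue
measure on `[0,∞)` in the other coordinates. -/
def sigmaInt (N : ℕ) (φa : ℝ → ℝ) (Z : ℝ) (i : Fin N) (f : (Fin N → ℝ) → ℝ) (b : ℝ) : ℝ :=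
  Z⁻¹ * ∫ φ, f φ * gaussianWeight φ * ∏ n ∈ Finset.univ.erase i, Real.exp (φa (φ n))
    ∂(Measure.pi fun n => if n = i then Measure.dirac b else volume.restrict (Set.Ici 0))

/-! Absorb the pinning factors `e^{φa}` into the one-site reference measure, so that only
`F = f ρ` has to be differentiated. In each coordinate, integrate by parts on `[0, ∞)` the slice
integral of `F` over the other coordinates, against the weight `e^{φa}`. The weight is `1`
beyond `a` and `F` decays like a Gaussian, so the part beyond `a` contributes `-σ(f|a)` and the
part below `a` is left as the integral over `[0, a]`. Finally `∂_h ρ(φ) = -ρ(φ) 𝓔(φ, h)` with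
`𝓔` the Dirichlet form of the chain, and summation by parts turns `-𝓔(φ, h)` into the discrete
Laplacian of `h` paired with `φ`, plus the term `φ_N h_N` coming from the free right endpoint. -/

open Asymptotics Filter Topology

section ProductDensity

variable {ι : Type*} {X : ι → Type*} [∀ i, MeasurableSpace (X i)]
  {μ : ∀ i, Measure (X i)} [∀ i, SigmaFinite (μ i)] {g : ∀ i, X i → ENNReal}

lemma lmarginal_finset_prod [DecidableEq ι] (hg : ∀ i, Measurable (g i)) (s : Finset ι) :
    ∫⋯∫⁻_s, (fun x => ∏ i ∈ s, g i (x i)) ∂μ = fun _ => ∏ i ∈ s, ∫⁻ t, g i t ∂μ i := by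
  induction s using Finset.induction_on with
  | empty => simp
  | insert i s hi ih =>
    have hmeas (t : Finset ι) : Measurable fun x : ∀ i, X i => ∏ j ∈ t, g j (x j) := by fun_prop
    have inner (x : ∀ i, X i) :
        ∫⁻ t, ∏ j ∈ insert i s, g j (Function.update x i t j) ∂μ i =
          (∫⁻ t, g i t ∂μ i) * ∏ j ∈ s, g j (x j) := by
      rw [← lintegral_mul_const _ (hg i)]
      refine lintegral_congr fun t => ?_
      rw [Finset.prod_insert hi, Function.update_self]
      congr 1
      refine Finset.prod_congr rfl fun j hj => ?_
      rw [Function.update_of_ne (ne_of_mem_of_not_mem hj hi)]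
    rw [lmarginal_insert' _ (hmeas _) hi]
    funext x
    simp only [inner]
    rw [Finset.prod_insert hi, ← congrFun ih x]
    exact lintegral_const_mul _ ((hmeas s).comp measurable_updateFinset)

variable [Fintype ι]

lemma lintegral_pi_prod (hg : ∀ i, Measurable (g i)) :
    ∫⁻ x, ∏ i, g i (x i) ∂Measure.pi μ = ∏ i, ∫⁻ t, g i t ∂μ i := by
  classical
  obtain h | ⟨⟨x⟩⟩ := isEmpty_or_nonempty (∀ i, X i)
  · obtain ⟨i, hi⟩ := isEmpty_pi.1 h
    simp [Finset.prod_eq_zero (Finset.mem_univ i)]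
  · rw [lintegral_eq_lmarginal_univ x, lmarginal_finset_prod hg]

lemma pi_withDensity (hg : ∀ i, Measurable (g i))
    [∀ i, SigmaFinite ((μ i).withDensity (g i))] :
    Measure.pi (fun i => (μ i).withDensity (g i)) =
      (Measure.pi μ).withDensity fun x => ∏ i, g i (x i) := by
  refine Measure.pi_eq fun s hs => ?_
  rw [withDensity_apply _ (.univ_pi hs), Measure.restrict_pi_pi, lintegral_pi_prod hg]
  exact Finset.prod_congr rfl fun i _ => (withDensity_apply _ (hs i)).symm

end ProductDensity

section Growth

variable {E G : Type*} [NormedAddCommGroup E] [NormedAddCommGroup G]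

/-- `f` is dominated by a power of `1 + ‖x‖`. The filter `⊤` makes the bound hold everywhere, not
only at infinity. -/
def HasPolynomialGrowth (f : E → G) : Prop :=
  ∃ k : ℕ, f =O[⊤] fun x => (1 + ‖x‖) ^ k

lemma isBigO_top_one_add_norm_pow {k m : ℕ} (hkm : k ≤ m) :
    (fun x : E => (1 + ‖x‖) ^ k) =O[⊤] fun x => (1 + ‖x‖) ^ m :=
  isBigO_of_le _ fun x => by
    have hx : 1 ≤ 1 + ‖x‖ := le_add_of_nonneg_right (norm_nonneg x)
    rw [Real.norm_of_nonneg (by positivity), Real.norm_of_nonneg (by positivity)]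
    exact pow_le_pow_right₀ hx hkm

lemma hasPolynomialGrowth_of_norm_le {f : E → G} {C : ℝ} (hC : ∀ x, ‖f x‖ ≤ C) :
    HasPolynomialGrowth f :=
  ⟨0, .of_bound C (.of_forall fun x => by simpa using hC x)⟩

lemma HasPolynomialGrowth.sub {f g : E → G} (hf : HasPolynomialGrowth f)
    (hg : HasPolynomialGrowth g) : HasPolynomialGrowth fun x => f x - g x := by
  obtain ⟨k, hk⟩ := hf
  obtain ⟨m, hm⟩ := hg
  exact ⟨max k m, (hk.trans (isBigO_top_one_add_norm_pow (le_max_left k m))).sub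
    (hm.trans (isBigO_top_one_add_norm_pow (le_max_right k m)))⟩

variable [NormedSpace ℝ G]

lemma HasPolynomialGrowth.smul {f : E → ℝ} {g : E → G} (hf : HasPolynomialGrowth f)
    (hg : HasPolynomialGrowth g) : HasPolynomialGrowth fun x => f x • g x := by
  obtain ⟨k, hk⟩ := hf
  obtain ⟨m, hm⟩ := hg
  exact ⟨k + m, by simpa only [pow_add, smul_eq_mul] using hk.smul hm⟩

variable [NormedSpace ℝ E]

lemma hasPolynomialGrowth_clm (L : E →L[ℝ] G) : HasPolynomialGrowth L := by
  refine ⟨1, .of_bound ‖L‖ (.of_forall fun x => (L.le_opNorm x).trans ?_)⟩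
  rw [Real.norm_of_nonneg (by positivity), pow_one]
  gcongr
  linarith

lemma HasPolynomialGrowth.of_fderiv {f : E → G} (hf : Differentiable ℝ f)
    (hf' : HasPolynomialGrowth (fderiv ℝ f)) : HasPolynomialGrowth f := by
  obtain ⟨k, hk⟩ := hf'
  obtain ⟨C, hC0, hC⟩ := hk.exists_nonneg
  refine ⟨k + 1, .of_bound (‖f 0‖ + C) (.of_forall fun x => ?_)⟩
  have hfderiv (y : E) (hy : y ∈ Metric.closedBall 0 ‖x‖) :
      ‖fderiv ℝ f y‖ ≤ C * (1 + ‖x‖) ^ k := by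
    refine (isBigOWith_top.1 hC y).trans ?_
    rw [Real.norm_of_nonneg (by positivity)]
    gcongr
    exact mem_closedBall_zero_iff.1 hy
  have hsub : ‖f x - f 0‖ ≤ C * (1 + ‖x‖) ^ k * ‖x - 0‖ :=
    (convex_closedBall 0 ‖x‖).norm_image_sub_le_of_norm_fderiv_le (fun y _ => hf y) hfderiv
      (Metric.mem_closedBall_self (norm_nonneg x)) (by simp)
  have hpow : 1 ≤ (1 + ‖x‖) ^ (k + 1) :=
    one_le_pow₀ (le_add_of_nonneg_right (norm_nonneg x))
  calc ‖f x‖ ≤ ‖f 0‖ + ‖f x - f 0‖ := norm_le_norm_add_norm_sub' _ _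
    _ ≤ ‖f 0‖ * (1 + ‖x‖) ^ (k + 1) + C * (1 + ‖x‖) ^ k * (1 + ‖x‖) := by
      rw [sub_zero] at hsub
      refine add_le_add (le_mul_of_one_le_right (norm_nonneg _) hpow) (hsub.trans ?_)
      gcongr
      linarith
    _ = (‖f 0‖ + C) * ‖(1 + ‖x‖) ^ (k + 1)‖ := by
      rw [Real.norm_of_nonneg (by positivity)]
      ring

end Growth

section GaussianDomination

variable {ι : Type*} [Fintype ι] {E : Type*} [NormedAddCommGroup E]

/-- `F` is dominated everywhere by a centred Gaussian `exp (-c * |φ|²)` for the Euclidean norm. The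
coordinates are squared explicitly because `ι → ℝ` carries the sup norm. -/
def GaussianBounded (F : (ι → ℝ) → E) : Prop :=
  ∃ c : ℝ, 0 < c ∧ F =O[⊤] fun φ => Real.exp (-c * ∑ i, φ i ^ 2)

lemma norm_le_one_add_sum_sq (φ : ι → ℝ) : ‖φ‖ ≤ 1 + ∑ i, φ i ^ 2 := by
  refine (pi_norm_le_iff_of_nonneg (by positivity)).2 fun i => ?_
  have hi : φ i ^ 2 ≤ ∑ j, φ j ^ 2 :=
    Finset.single_le_sum (f := fun j => φ j ^ 2) (fun j _ => sq_nonneg _) (Finset.mem_univ i)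
  rw [Real.norm_eq_abs]
  nlinarith [sq_abs (φ i), sq_nonneg (|φ i| - 1)]

lemma isBigO_top_one_add_norm_pow_exp_sum_sq {c : ℝ} (hc : 0 < c) (k : ℕ) :
    (fun φ : ι → ℝ => (1 + ‖φ‖) ^ k) =O[⊤] fun φ => Real.exp (c * ∑ i, φ i ^ 2) := by
  refine .of_bound (c⁻¹ ^ k * k.factorial * Real.exp (2 * c)) (.of_forall fun φ => ?_)
  set S := ∑ i, φ i ^ 2
  have : 0 ≤ S := Finset.sum_nonneg fun i _ => sq_nonneg _
  rw [Real.norm_of_nonneg (by positivity), Real.norm_of_nonneg (by positivity)]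
  calc (1 + ‖φ‖) ^ k ≤ (2 + S) ^ k := by
        refine pow_le_pow_left₀ (by positivity) ?_ k
        linarith [norm_le_one_add_sum_sq φ]
    _ = c⁻¹ ^ k * k.factorial * ((c * (2 + S)) ^ k / k.factorial) := by
        have : (k.factorial : ℝ) ≠ 0 := by positivity
        rw [mul_assoc, mul_div_cancel₀ _ this, ← mul_pow, inv_mul_cancel_left₀ hc.ne']
    _ ≤ c⁻¹ ^ k * k.factorial * Real.exp (c * (2 + S)) := by
        gcongr
        exact Real.pow_div_factorial_le_exp _ (by positivity) k
    _ = c⁻¹ ^ k * k.factorial * Real.exp (2 * c) * Real.exp (c * S) := by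
        rw [mul_assoc _ (Real.exp _), ← Real.exp_add]
        ring_nf

lemma GaussianBounded.smul_of_hasPolynomialGrowth [NormedSpace ℝ E] {F : (ι → ℝ) → ℝ}
    {H : (ι → ℝ) → E} (hF : GaussianBounded F) (hH : HasPolynomialGrowth H) :
    GaussianBounded fun φ => F φ • H φ := by
  obtain ⟨c, hc, hF⟩ := hF
  obtain ⟨k, hk⟩ := hH
  refine ⟨c / 2, half_pos hc, (hF.smul (hk.trans
    (isBigO_top_one_add_norm_pow_exp_sum_sq (half_pos hc) k))).congr_right fun φ => ?_⟩
  rw [smul_eq_mul, ← Real.exp_add]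
  ring_nf

lemma GaussianBounded.clm_apply {V : Type*} [NormedAddCommGroup V] [NormedSpace ℝ V]
    [NormedSpace ℝ E] {L : (ι → ℝ) → V →L[ℝ] E} (hL : GaussianBounded L) (v : V) :
    GaussianBounded fun φ => L φ v := by
  obtain ⟨c, hc, hL⟩ := hL
  refine ⟨c, hc, IsBigO.trans (.of_bound ‖v‖ (.of_forall fun φ => ?_)) hL⟩
  rw [mul_comm]
  exact (L φ).le_opNorm v

/-- A measure on `ℝ` for which every centred Gaussian is integrable, so that its powers integrate
every measurable `GaussianBounded` function. -/
def IntegratesGaussians (μ : Measure ℝ) : Prop :=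
  ∀ c : ℝ, 0 < c → Integrable (fun x => Real.exp (-c * x ^ 2)) μ

variable {μ : Measure ℝ} [SigmaFinite μ]

lemma IntegratesGaussians.integrable_pi (hμ : IntegratesGaussians μ) {c : ℝ} (hc : 0 < c) :
    Integrable (fun φ : ι → ℝ => Real.exp (-c * ∑ i, φ i ^ 2)) (Measure.pi fun _ => μ) := by
  have := Integrable.fintype_prod (ι := ι) (μ := fun _ => μ) fun _ => hμ c hc
  simpa only [← Real.exp_sum, ← Finset.mul_sum] using this

lemma GaussianBounded.integrable {F : (ι → ℝ) → E} (hF : GaussianBounded F)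
    (hμ : IntegratesGaussians μ) (hFm : AEStronglyMeasurable F (Measure.pi fun _ => μ)) :
    Integrable F (Measure.pi fun _ => μ) := by
  obtain ⟨c, hc, hF⟩ := hF
  obtain ⟨K, hK⟩ := isBigO_top.1 hF
  exact ((hμ.integrable_pi hc).norm.const_mul K).mono' hFm (.of_forall hK)

end GaussianDomination

section Slices

variable {n : ℕ} (i : Fin (n + 1))

lemma sum_sq_insertNth (b : ℝ) (y : Fin n → ℝ) :
    ∑ j, i.insertNth (α := fun _ => ℝ) b y j ^ 2 = b ^ 2 + ∑ j, y j ^ 2 := by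
  rw [Fin.sum_univ_succAbove _ i]
  simp only [Fin.insertNth_apply_same, Fin.insertNth_apply_succAbove]

lemma continuous_insertNth_left (y : Fin n → ℝ) :
    Continuous fun b : ℝ => i.insertNth (α := fun _ => ℝ) b y :=
  Continuous.finInsertNth (A := fun _ => ℝ) i continuous_id continuous_const

lemma continuous_insertNth_right (b : ℝ) :
    Continuous fun y : Fin n → ℝ => i.insertNth (α := fun _ => ℝ) b y :=
  Continuous.finInsertNth (A := fun _ => ℝ) i continuous_const continuous_id

lemma hasDerivAt_insertNth (y : Fin n → ℝ) (b : ℝ) :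
    HasDerivAt (fun b : ℝ => i.insertNth (α := fun _ => ℝ) b y) (Pi.single i 1) b := by
  refine hasDerivAt_pi.2 fun j => ?_
  induction j using i.succAboveCases with
  | x => simpa using hasDerivAt_id' b
  | p j => simpa [Fin.succAbove_ne] using hasDerivAt_const b (y j)

variable {E : Type*} [NormedAddCommGroup E] {F : (Fin (n + 1) → ℝ) → E}

lemma GaussianBounded.exists_norm_insertNth_le (hF : GaussianBounded F) :
    ∃ K c : ℝ, 0 ≤ K ∧ 0 < c ∧ ∀ b (y : Fin n → ℝ),
      ‖F (i.insertNth b y)‖ ≤ K * Real.exp (-c * b ^ 2) * Real.exp (-c * ∑ j, y j ^ 2) := by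
  obtain ⟨c, hc, hF⟩ := hF
  obtain ⟨K, hK, hb⟩ := hF.exists_nonneg
  refine ⟨K, c, hK, hc, fun b y => (isBigOWith_top.1 hb _).trans_eq ?_⟩
  rw [Real.norm_of_nonneg (Real.exp_nonneg _), sum_sq_insertNth, mul_add, Real.exp_add, mul_assoc]

variable (μ : Measure ℝ)

lemma GaussianBounded.exists_integrable_bound_insertNth [SigmaFinite μ] (hF : GaussianBounded F)
    (hμ : IntegratesGaussians μ) :
    ∃ g : (Fin n → ℝ) → ℝ, Integrable g (Measure.pi fun _ => μ) ∧
      ∀ b y, ‖F (i.insertNth b y)‖ ≤ g y := by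
  obtain ⟨K, c, hK, hc, hb⟩ := hF.exists_norm_insertNth_le i
  refine ⟨_, (hμ.integrable_pi hc).const_mul K, fun b y => (hb b y).trans ?_⟩
  have hexp : Real.exp (-c * b ^ 2) ≤ 1 := Real.exp_le_one_iff.2 (by nlinarith [sq_nonneg b])
  gcongr
  exact mul_le_of_le_one_right hK hexp

variable [NormedSpace ℝ E]

/-- The integral of `F` over all coordinates but the `i`-th, which is frozen at `b`. -/
def sliceIntegral (F : (Fin (n + 1) → ℝ) → E) (b : ℝ) : E :=
  ∫ y, F (i.insertNth b y) ∂Measure.pi fun _ : Fin n => μ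

variable {μ} [SigmaFinite μ]

lemma integral_pi_ite_dirac (b : ℝ) :
    ∫ φ, F φ ∂Measure.pi (fun k => if k = i then Measure.dirac b else μ) =
      sliceIntegral i μ F b := by
  have (k : Fin (n + 1)) : SigmaFinite (if k = i then Measure.dirac b else μ) := by
    split <;> infer_instance
  have hmp := (measurePreserving_piFinSuccAbove
    (fun k => if k = i then Measure.dirac b else μ) i).symm
  rw [← hmp.integral_comp' F]
  simp only [if_true, Fin.succAbove_ne, if_false]
  rw [Measure.dirac_prod, (measurableEmbedding_prodMk_left b).integral_map]
  rfl

lemma integral_pi_eq_integral_sliceIntegral (hF : Integrable F (Measure.pi fun _ => μ)) :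
    ∫ φ, F φ ∂(Measure.pi fun _ => μ) = ∫ b, sliceIntegral i μ F b ∂μ := by
  have hmp := (measurePreserving_piFinSuccAbove (fun _ : Fin (n + 1) => μ) i).symm
  rw [← hmp.integral_comp' F, integral_prod]
  · rfl
  · exact (hmp.integrable_comp_emb (MeasurableEquiv.measurableEmbedding _)).2 hF

lemma GaussianBounded.exists_norm_sliceIntegral_le (hF : GaussianBounded F)
    (hμ : IntegratesGaussians μ) :
    ∃ K c : ℝ, 0 < c ∧ ∀ b, ‖sliceIntegral i μ F b‖ ≤ K * Real.exp (-c * b ^ 2) := by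
  obtain ⟨K, c, -, hc, hb⟩ := hF.exists_norm_insertNth_le i
  refine ⟨K * ∫ y : Fin n → ℝ, Real.exp (-c * ∑ j, y j ^ 2) ∂(Measure.pi fun _ => μ), c, hc,
    fun b => ?_⟩
  refine (norm_integral_le_of_norm_le ((hμ.integrable_pi hc).const_mul _)
    (.of_forall (hb b))).trans_eq ?_
  rw [integral_const_mul]
  ring

lemma continuous_sliceIntegral (hFb : GaussianBounded F) (hμ : IntegratesGaussians μ)
    (hF : Continuous F) : Continuous (sliceIntegral i μ F) := by
  obtain ⟨g, hg, hb⟩ := hFb.exists_integrable_bound_insertNth i μ hμ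
  have hmeas (b : ℝ) :
      AEStronglyMeasurable (fun y => F (i.insertNth b y)) (Measure.pi fun _ => μ) :=
    (hF.comp (continuous_insertNth_right i b)).aestronglyMeasurable
  exact continuous_of_dominated hmeas (fun b => .of_forall (hb b)) hg
    (.of_forall fun y => hF.comp (continuous_insertNth_left i y))

lemma integrable_sliceIntegral (hFb : GaussianBounded F) (hμ : IntegratesGaussians μ)
    (hF : Continuous F) : Integrable (sliceIntegral i μ F) := by
  obtain ⟨K, c, hc, hb⟩ := hFb.exists_norm_sliceIntegral_le i hμ
  exact ((integrable_exp_neg_mul_sq hc).const_mul K).mono'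
    (continuous_sliceIntegral i hFb hμ hF).aestronglyMeasurable (.of_forall hb)

lemma tendsto_sliceIntegral_atTop (hFb : GaussianBounded F) (hμ : IntegratesGaussians μ) :
    Tendsto (sliceIntegral i μ F) atTop (𝓝 0) := by
  obtain ⟨K, c, hc, hb⟩ := hFb.exists_norm_sliceIntegral_le i hμ
  have hexp : Tendsto (fun b : ℝ => -c * b ^ 2) atTop atBot :=
    (tendsto_pow_atTop two_ne_zero).const_mul_atTop_of_neg (neg_neg_of_pos hc)
  exact squeeze_zero_norm hb (by simpa using (Real.tendsto_exp_atBot.comp hexp).const_mul K)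

lemma hasDerivAt_sliceIntegral (hF : ContDiff ℝ 1 F) (hFb : GaussianBounded F)
    (hF'b : GaussianBounded (fderiv ℝ F)) (hμ : IntegratesGaussians μ) (b : ℝ) :
    HasDerivAt (sliceIntegral i μ F)
      (sliceIntegral i μ (fun φ => fderiv ℝ F φ (Pi.single i 1)) b) b := by
  have hF' : Continuous fun φ => fderiv ℝ F φ (Pi.single i 1) :=
    (hF.continuous_fderiv one_ne_zero).clm_apply continuous_const
  obtain ⟨g, hg, hb⟩ := hFb.exists_integrable_bound_insertNth i μ hμ
  obtain ⟨g', hg', hb'⟩ :=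
    (hF'b.clm_apply (Pi.single i 1)).exists_integrable_bound_insertNth i μ hμ
  have hmeas {H : (Fin (n + 1) → ℝ) → E} (hH : Continuous H) (b : ℝ) :
      AEStronglyMeasurable (fun y => H (i.insertNth b y)) (Measure.pi fun _ => μ) :=
    (hH.comp (continuous_insertNth_right i b)).aestronglyMeasurable
  exact (hasDerivAt_integral_of_dominated_loc_of_deriv_le univ_mem
    (.of_forall (hmeas hF.continuous))
    (hg.mono' (hmeas hF.continuous b) (.of_forall (hb b))) (hmeas hF' b)
    (.of_forall fun y x _ => hb' x y) hg' (.of_forall fun y x _ =>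
      (hF.differentiable one_ne_zero _).hasFDerivAt.comp_hasDerivAt x
        (hasDerivAt_insertNth i y x))).2

lemma contDiff_one_sliceIntegral (hF : ContDiff ℝ 1 F) (hFb : GaussianBounded F)
    (hF'b : GaussianBounded (fderiv ℝ F)) (hμ : IntegratesGaussians μ) :
    ContDiff ℝ 1 (sliceIntegral i μ F) := by
  have hderiv := hasDerivAt_sliceIntegral i hF hFb hF'b hμ
  refine contDiff_one_iff_deriv.2 ⟨fun b => (hderiv b).differentiableAt, ?_⟩
  rw [funext fun b => (hderiv b).deriv]
  exact continuous_sliceIntegral i (hF'b.clm_apply _) hμ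
    ((hF.continuous_fderiv one_ne_zero).clm_apply continuous_const)

end Slices

section StripMeasure

lemma setIntegral_Ici_mul_deriv_of_eq_one {S S' w : ℝ → ℝ} {l a : ℝ} (hla : l ≤ a)
    (hS : ∀ x, a ≤ x → HasDerivAt S (S' x) x)
    (hwS' : IntegrableOn (fun x => w x * S' x) (Set.Ici l))
    (hlim : Tendsto S atTop (𝓝 0)) (hw : ∀ x, a < x → w x = 1) :
    ∫ x in Set.Ici l, w x * S' x = (∫ x in l..a, w x * S' x) - S a := by
  have heq : Set.EqOn (fun x => w x * S' x) S' (Set.Ioi a) := fun x hx => by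
    simp only [hw x hx, one_mul]
  have hint : IntegrableOn (fun x => w x * S' x) (Set.Ioi a) :=
    hwS'.mono_set fun x hx => hla.trans (le_of_lt hx)
  have htail : ∫ x in Set.Ioi a, w x * S' x = -S a := by
    rw [setIntegral_congr_fun measurableSet_Ioi heq, integral_Ioi_of_hasDerivAt_of_tendsto
      (hS a le_rfl).continuousAt.continuousWithinAt (fun x hx => hS x (le_of_lt hx))
      (hint.congr_fun heq measurableSet_Ioi) hlim, zero_sub]
  rw [integral_Ici_eq_integral_Ioi, ← Set.Ioc_union_Ioi_eq_Ioi hla,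
    setIntegral_union Set.Ioc_disjoint_Ioi_same measurableSet_Ioi
      (hwS'.mono_set fun x hx => le_of_lt hx.1) hint, htail, intervalIntegral.integral_of_le hla,
    sub_eq_add_neg]

/-- The one-site reference measure `e^{φa(x)} dx` on `[0,∞)`. Absorbing the pinning weight into the
reference measure leaves only the Gaussian factor to be differentiated. -/
def stripMeasure (φa : ℝ → ℝ) : Measure ℝ :=
  (volume.restrict (Set.Ici 0)).withDensity fun x => ENNReal.ofReal (Real.exp (φa x))

variable {φa : ℝ → ℝ}

instance : SigmaFinite (stripMeasure φa) :=
  SigmaFinite.withDensity_ofReal _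

lemma integrable_stripMeasure_iff (hφa : Measurable φa) {g : ℝ → ℝ} :
    Integrable g (stripMeasure φa) ↔ IntegrableOn (fun x => Real.exp (φa x) * g x) (Set.Ici 0) := by
  rw [stripMeasure, integrable_withDensity_iff_integrable_smul' (by fun_prop) (by simp)]
  simp only [ENNReal.toReal_ofReal (Real.exp_nonneg _), smul_eq_mul, IntegrableOn]

lemma integral_stripMeasure (hφa : Measurable φa) (g : ℝ → ℝ) :
    ∫ x, g x ∂stripMeasure φa = ∫ x in Set.Ici 0, Real.exp (φa x) * g x := by
  rw [stripMeasure, integral_withDensity_eq_integral_toReal_smul (by fun_prop) (by simp)]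
  simp only [ENNReal.toReal_ofReal (Real.exp_nonneg _), smul_eq_mul]

lemma integrable_stripMeasure (hφa : Measurable φa) (hbdd : BddAbove (Set.range φa)) {g : ℝ → ℝ}
    (hg : Integrable g) : Integrable g (stripMeasure φa) := by
  obtain ⟨M, hM⟩ := hbdd
  rw [integrable_stripMeasure_iff hφa]
  refine (hg.bdd_mul (c := Real.exp M) (by fun_prop) (.of_forall fun x => ?_)).integrableOn
  rw [Real.norm_of_nonneg (Real.exp_nonneg _), Real.exp_le_exp]
  exact hM (Set.mem_range_self x)

lemma integratesGaussians_stripMeasure (hφa : Measurable φa) (hbdd : BddAbove (Set.range φa)) :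
    IntegratesGaussians (stripMeasure φa) :=
  fun _ hc => integrable_stripMeasure hφa hbdd (integrable_exp_neg_mul_sq hc)

lemma integral_pi_stripMeasure {ι : Type*} [Fintype ι] (hφa : Measurable φa)
    (F : (ι → ℝ) → ℝ) :
    ∫ φ, F φ ∂(Measure.pi fun _ => stripMeasure φa) =
      ∫ φ, F φ * ∏ i, Real.exp (φa (φ i)) ∂(Measure.pi fun _ => volume.restrict (Set.Ici 0)) := by
  have : ∀ _ : ι, SigmaFinite ((volume.restrict (Set.Ici (0 : ℝ))).withDensity
    fun x => ENNReal.ofReal (Real.exp (φa x))) := fun _ => SigmaFinite.withDensity_ofReal _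
  simp only [stripMeasure]
  rw [pi_withDensity fun _ => by fun_prop,
    integral_withDensity_eq_integral_toReal_smul (by fun_prop)
      (.of_forall fun φ => ENNReal.prod_lt_top fun _ _ => ENNReal.ofReal_lt_top)]
  simp only [ENNReal.toReal_prod, ENNReal.toReal_ofReal (Real.exp_nonneg _), smul_eq_mul, mul_comm]

variable {n : ℕ} {F : (Fin (n + 1) → ℝ) → ℝ} {a : ℝ}

lemma integral_fderiv_single_pi_stripMeasure (hφa : Measurable φa)
    (hbdd : BddAbove (Set.range φa)) (ha : 0 ≤ a) (hsupp : ∀ x, a < x → φa x = 0)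
    (hF : ContDiff ℝ 1 F) (hFb : GaussianBounded F) (hF'b : GaussianBounded (fderiv ℝ F))
    (i : Fin (n + 1)) :
    ∫ φ, fderiv ℝ F φ (Pi.single i 1) ∂(Measure.pi fun _ => stripMeasure φa) =
      (∫ b in (0 : ℝ)..a, Real.exp (φa b) * deriv (sliceIntegral i (stripMeasure φa) F) b) -
        sliceIntegral i (stripMeasure φa) F a := by
  have hμ := integratesGaussians_stripMeasure hφa hbdd
  have hF' : Continuous fun φ => fderiv ℝ F φ (Pi.single i 1) :=
    (hF.continuous_fderiv one_ne_zero).clm_apply continuous_const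
  have hF'i := hF'b.clm_apply (Pi.single i (1 : ℝ))
  have hderiv := hasDerivAt_sliceIntegral i hF hFb hF'b hμ
  rw [integral_pi_eq_integral_sliceIntegral i (hF'i.integrable hμ hF'.aestronglyMeasurable),
    integral_stripMeasure hφa]
  simp only [fun b => (hderiv b).deriv]
  exact setIntegral_Ici_mul_deriv_of_eq_one ha (fun b _ => hderiv b)
    ((integrable_stripMeasure_iff hφa).1
      (integrable_stripMeasure hφa hbdd (integrable_sliceIntegral i hF'i hμ hF')))
    (tendsto_sliceIntegral_atTop i hFb hμ) fun b hb => by rw [hsupp b hb, Real.exp_zero]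

lemma integral_fderiv_pi_stripMeasure (hφa : Measurable φa)
    (hbdd : BddAbove (Set.range φa)) (ha : 0 ≤ a) (hsupp : ∀ x, a < x → φa x = 0)
    (hF : ContDiff ℝ 1 F) (hFb : GaussianBounded F) (hF'b : GaussianBounded (fderiv ℝ F))
    (h : Fin (n + 1) → ℝ) :
    ∫ φ, fderiv ℝ F φ h ∂(Measure.pi fun _ => stripMeasure φa) =
      ∑ i, h i * ((∫ b in (0 : ℝ)..a,
          Real.exp (φa b) * deriv (sliceIntegral i (stripMeasure φa) F) b) -
        sliceIntegral i (stripMeasure φa) F a) := by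
  have hlin (φ : Fin (n + 1) → ℝ) :
      fderiv ℝ F φ h = ∑ i, h i * fderiv ℝ F φ (Pi.single i 1) := by
    conv_lhs => rw [pi_eq_sum_univ' h, map_sum]
    simp only [map_smul, smul_eq_mul]
  have hint (i : Fin (n + 1)) : Integrable (fun φ => fderiv ℝ F φ (Pi.single i 1))
      (Measure.pi fun _ => stripMeasure φa) :=
    (hF'b.clm_apply _).integrable (integratesGaussians_stripMeasure hφa hbdd)
      ((hF.continuous_fderiv one_ne_zero).clm_apply continuous_const).aestronglyMeasurable
  simp only [hlin]
  rw [integral_finsetSum _ fun i _ => (hint i).const_mul _]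
  refine Finset.sum_congr rfl fun i _ => ?_
  rw [integral_const_mul,
    integral_fderiv_single_pi_stripMeasure hφa hbdd ha hsupp hF hFb hF'b]

end StripMeasure

section GaussianWeight

/-- `pad · j` as a continuous linear functional. -/
def padCLM (N j : ℕ) : (Fin N → ℝ) →L[ℝ] ℝ :=
  if hj : 1 ≤ j ∧ j ≤ N then ContinuousLinearMap.proj ⟨j - 1, by omega⟩ else 0

/-- The discrete gradient `φ ↦ φ_{j+1} − φ_j` across the bond `(j, j + 1)`. -/
def discreteGrad (N j : ℕ) : (Fin N → ℝ) →L[ℝ] ℝ :=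
  padCLM N (j + 1) - padCLM N j

/-- The bilinear form whose quadratic form is twice the energy in `gaussianWeight`. Only the bonds
`(j, j + 1)` with `j < N` count, so the left endpoint is pinned and the right endpoint is free. -/
def dirichletForm (N : ℕ) : (Fin N → ℝ) →L[ℝ] (Fin N → ℝ) →L[ℝ] ℝ :=
  ∑ j ∈ Finset.range N, (discreteGrad N j).smulRight (discreteGrad N j)

variable {N : ℕ}

lemma discreteGrad_apply (j : ℕ) (φ : Fin N → ℝ) :
    discreteGrad N j φ = pad φ (j + 1) - pad φ j := by
  have hpad (k : ℕ) : padCLM N k φ = pad φ k := by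
    unfold padCLM pad
    split <;> rfl
  rw [discreteGrad, sub_apply, hpad, hpad]

lemma dirichletForm_apply (φ h : Fin N → ℝ) :
    dirichletForm N φ h = ∑ j ∈ Finset.range N, discreteGrad N j φ * discreteGrad N j h := by
  simp [dirichletForm]

lemma dirichletForm_comm (φ h : Fin N → ℝ) : dirichletForm N φ h = dirichletForm N h φ := by
  simp only [dirichletForm_apply, mul_comm]

lemma pad_zero (φ : Fin N → ℝ) : pad φ 0 = 0 := by
  simp [pad]

lemma pad_val_succ (φ : Fin N → ℝ) (i : Fin N) : pad φ (i.1 + 1) = φ i := by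
  simp [pad, Nat.succ_le_of_lt i.2]

lemma pad_of_lt (φ : Fin N → ℝ) {j : ℕ} (hj : N < j) : pad φ j = 0 := by
  simp [pad, hj]

lemma sum_range_sub_mul_sub {R : Type*} [CommRing R] (p q : ℕ → R) (hp : p 0 = 0) (N : ℕ) :
    ∑ j ∈ Finset.range N, (p (j + 1) - p j) * (q (j + 1) - q j) =
      p N * (q (N + 1) - q N) -
        ∑ j ∈ Finset.range N, p (j + 1) * (q (j + 2) + q j - 2 * q (j + 1)) := by
  induction N with
  | zero => simp [hp]
  | succ N ih => rw [Finset.sum_range_succ, Finset.sum_range_succ, ih]; ring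

lemma neg_dirichletForm_eq_sum_laplacian {n : ℕ} (φ h : Fin (n + 1) → ℝ) :
    -dirichletForm (n + 1) φ h =
      (∑ i : Fin (n + 1), φ i * (pad h (i.1 + 2) + pad h i.1 - 2 * pad h (i.1 + 1))) +
        φ (Fin.last n) * h (Fin.last n) := by
  have hφ : pad φ (n + 1) = φ (Fin.last n) := pad_val_succ φ (Fin.last n)
  have hh : pad h (n + 1) = h (Fin.last n) := pad_val_succ h (Fin.last n)
  simp only [dirichletForm_apply, discreteGrad_apply]
  rw [sum_range_sub_mul_sub _ _ (pad_zero φ), pad_of_lt h (Nat.lt_succ_self _), hφ, hh,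
    Finset.sum_range]
  simp only [pad_val_succ]
  ring

lemma sq_pad_le_mul_dirichletForm_self (φ : Fin N → ℝ) {k : ℕ} (hk : k ≤ N) :
    pad φ k ^ 2 ≤ N * dirichletForm N φ φ := by
  have htelescope : pad φ k = ∑ j ∈ Finset.range k, discreteGrad N j φ := by
    simp only [discreteGrad_apply]
    rw [Finset.sum_range_sub, pad_zero, sub_zero]
  calc pad φ k ^ 2 ≤ k * ∑ j ∈ Finset.range k, discreteGrad N j φ ^ 2 := by
        simpa only [htelescope, Finset.card_range] using
          sq_sum_le_card_mul_sum_sq (s := Finset.range k) (f := fun j => discreteGrad N j φ)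
    _ ≤ N * ∑ j ∈ Finset.range N, discreteGrad N j φ ^ 2 := by gcongr
    _ = N * dirichletForm N φ φ := by simp only [dirichletForm_apply, sq]

-- Discrete Poincaré inequality: the coordinates telescope from the pinned left endpoint.
lemma sum_sq_le_mul_dirichletForm_self (φ : Fin N → ℝ) :
    ∑ i, φ i ^ 2 ≤ N ^ 2 * dirichletForm N φ φ :=
  calc ∑ i, φ i ^ 2 ≤ ∑ _i : Fin N, N * dirichletForm N φ φ :=
        Finset.sum_le_sum fun i _ => pad_val_succ φ i ▸ sq_pad_le_mul_dirichletForm_self φ i.2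
    _ = N ^ 2 * dirichletForm N φ φ := by
        rw [Finset.sum_const, Finset.card_univ, Fintype.card_fin, nsmul_eq_mul]
        ring

lemma gaussianWeight_eq_exp (φ : Fin N → ℝ) :
    gaussianWeight φ = Real.exp (-2⁻¹ * dirichletForm N φ φ) := by
  simp only [gaussianWeight, dirichletForm_apply, discreteGrad_apply, Finset.mul_sum, sq,
    div_eq_inv_mul, neg_mul, Finset.sum_neg_distrib]

lemma gaussianWeight_pos (φ : Fin N → ℝ) : 0 < gaussianWeight φ :=
  Real.exp_pos _

lemma contDiff_gaussianWeight {m : WithTop ℕ∞} : ContDiff ℝ m (gaussianWeight (N := N)) := by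
  simp only [funext gaussianWeight_eq_exp]
  fun_prop

lemma hasFDerivAt_gaussianWeight (φ : Fin N → ℝ) :
    HasFDerivAt gaussianWeight (-gaussianWeight φ • dirichletForm N φ) φ := by
  have hquad : HasFDerivAt (fun ψ => dirichletForm N ψ ψ) (2 • dirichletForm N φ) φ := by
    refine ((dirichletForm N).hasFDerivAt.clm_apply (hasFDerivAt_id φ)).congr_fderiv ?_
    ext h
    simp [dirichletForm_comm h φ, two_mul]
  simp only [funext gaussianWeight_eq_exp]
  refine (hquad.const_mul (-2⁻¹)).exp.congr_fderiv ?_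
  module

lemma gaussianBounded_gaussianWeight : GaussianBounded (gaussianWeight (N := N)) := by
  refine ⟨(2 * (N ^ 2 + 1))⁻¹, by positivity, isBigO_of_le _ fun φ => ?_⟩
  have hpoincare : ∑ i, φ i ^ 2 ≤ (N ^ 2 + 1) * dirichletForm N φ φ := by
    have hnonneg : 0 ≤ dirichletForm N φ φ := by
      rw [dirichletForm_apply]
      exact Finset.sum_nonneg fun j _ => mul_self_nonneg _
    linarith [sum_sq_le_mul_dirichletForm_self φ]
  rw [gaussianWeight_eq_exp, Real.norm_of_nonneg (Real.exp_nonneg _),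
    Real.norm_of_nonneg (Real.exp_nonneg _), Real.exp_le_exp, neg_mul, neg_mul,
    neg_le_neg_iff, inv_mul_le_iff₀ (by positivity)]
  linarith

variable {f : (Fin N → ℝ) → ℝ}

lemma fderiv_mul_gaussianWeight (hf : Differentiable ℝ f) (φ : Fin N → ℝ) :
    fderiv ℝ (fun ψ => f ψ * gaussianWeight ψ) φ =
      gaussianWeight φ • (fderiv ℝ f φ - f φ • dirichletForm N φ) := by
  refine ((hf φ).hasFDerivAt.mul (hasFDerivAt_gaussianWeight φ)).fderiv.trans ?_
  module

lemma HasPolynomialGrowth.gaussianBounded_mul_gaussianWeight (hf : HasPolynomialGrowth f) :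
    GaussianBounded fun φ => f φ * gaussianWeight φ := by
  simpa only [smul_eq_mul, mul_comm] using
    gaussianBounded_gaussianWeight.smul_of_hasPolynomialGrowth hf

lemma gaussianBounded_fderiv_mul_gaussianWeight (hf : Differentiable ℝ f)
    (hf' : HasPolynomialGrowth (fderiv ℝ f)) :
    GaussianBounded (fderiv ℝ fun φ => f φ * gaussianWeight φ) := by
  rw [funext (fderiv_mul_gaussianWeight hf)]
  exact gaussianBounded_gaussianWeight.smul_of_hasPolynomialGrowth
    (hf'.sub ((HasPolynomialGrowth.of_fderiv hf hf').smul (hasPolynomialGrowth_clm _)))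

lemma integral_fderiv_mul_gaussianWeight {μ : Measure ℝ} [SigmaFinite μ]
    (hμ : IntegratesGaussians μ) (hf : ContDiff ℝ 1 f) (hf' : HasPolynomialGrowth (fderiv ℝ f))
    (h : Fin N → ℝ) :
    ∫ φ, fderiv ℝ f φ h * gaussianWeight φ ∂(Measure.pi fun _ => μ) =
      (∫ φ, fderiv ℝ (fun ψ => f ψ * gaussianWeight ψ) φ h ∂(Measure.pi fun _ => μ)) -
        ∫ φ, f φ * -dirichletForm N φ h * gaussianWeight φ ∂(Measure.pi fun _ => μ) := by
  have hfd := hf.differentiable one_ne_zero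
  have hρ : Continuous (gaussianWeight (N := N)) := (contDiff_gaussianWeight (m := 0)).continuous
  have hF' : Continuous fun φ => fderiv ℝ (fun ψ => f ψ * gaussianWeight ψ) φ h :=
    ((hf.mul contDiff_gaussianWeight).continuous_fderiv one_ne_zero).clm_apply continuous_const
  have hfB : HasPolynomialGrowth fun φ => f φ * -dirichletForm N φ h :=
    (HasPolynomialGrowth.of_fderiv hfd hf').smul
      (hasPolynomialGrowth_clm (-(dirichletForm N).flip h))
  have hfBc : Continuous fun φ => f φ * -dirichletForm N φ h * gaussianWeight φ := by
    have := hf.continuous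
    fun_prop
  rw [← integral_sub
    (((gaussianBounded_fderiv_mul_gaussianWeight hfd hf').clm_apply h).integrable hμ
      hF'.aestronglyMeasurable)
    (hfB.gaussianBounded_mul_gaussianWeight.integrable hμ hfBc.aestronglyMeasurable)]
  simp only [fderiv_mul_gaussianWeight hfd, smul_apply, sub_apply, smul_eq_mul]
  refine congrArg _ (funext fun φ => ?_)
  ring

end GaussianWeight

section WettingMeasure

variable {φa : ℝ → ℝ} {Z : ℝ}

lemma integral_wettingMeasure {N : ℕ} (hφa : Measurable φa) (hZ : 0 ≤ Z)
    (F : (Fin N → ℝ) → ℝ) :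
    ∫ φ, F φ ∂wettingMeasure N φa Z =
      Z⁻¹ * ∫ φ, F φ * gaussianWeight φ ∂(Measure.pi fun _ => stripMeasure φa) := by
  have hdens (φ : Fin N → ℝ) : 0 ≤ Z⁻¹ * (gaussianWeight φ * ∏ i, Real.exp (φa (φ i))) := by
    have := gaussianWeight_pos φ
    positivity
  have hρ : Measurable (gaussianWeight (N := N)) :=
    (contDiff_gaussianWeight (m := 0)).continuous.measurable
  rw [wettingMeasure, integral_withDensity_eq_integral_toReal_smul (by fun_prop)
    (.of_forall fun _ => ENNReal.ofReal_lt_top), integral_pi_stripMeasure hφa,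
    ← integral_const_mul]
  simp only [ENNReal.toReal_ofReal (hdens _), smul_eq_mul]
  refine congrArg _ (funext fun φ => ?_)
  ring

lemma sigmaInt_eq_sliceIntegral {n : ℕ} (hφa : Measurable φa) (i : Fin (n + 1))
    (f : (Fin (n + 1) → ℝ) → ℝ) (b : ℝ) :
    sigmaInt (n + 1) φa Z i f b =
      Z⁻¹ * sliceIntegral i (stripMeasure φa) (fun φ => f φ * gaussianWeight φ) b := by
  have herase (y : Fin n → ℝ) :
      ∏ k ∈ Finset.univ.erase i, Real.exp (φa (i.insertNth (α := fun _ => ℝ) b y k)) =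
        ∏ j, Real.exp (φa (y j)) := by
    rw [← Finset.compl_singleton, ← Fin.image_succAbove_univ,
      Finset.prod_image Fin.succAbove_right_injective.injOn]
    simp only [Fin.insertNth_apply_succAbove]
  rw [sigmaInt, integral_pi_ite_dirac, sliceIntegral, sliceIntegral, integral_pi_stripMeasure hφa]
  simp only [herase]

lemma integral_mul_derivWithin_sigmaInt_sub {n : ℕ} (hφa : Measurable φa) {a : ℝ} (ha : 0 ≤ a)
    {i : Fin (n + 1)} {f : (Fin (n + 1) → ℝ) → ℝ}
    (hS : Differentiable ℝ (sliceIntegral i (stripMeasure φa) fun φ => f φ * gaussianWeight φ)) :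
    (∫ b in (0 : ℝ)..a, Real.exp (φa b) *
        derivWithin (fun c => sigmaInt (n + 1) φa Z i f c) (Set.Ici 0) b) -
          sigmaInt (n + 1) φa Z i f a =
      Z⁻¹ * ((∫ b in (0 : ℝ)..a, Real.exp (φa b) *
        deriv (sliceIntegral i (stripMeasure φa) fun φ => f φ * gaussianWeight φ) b) -
          sliceIntegral i (stripMeasure φa) (fun φ => f φ * gaussianWeight φ) a) := by
  simp only [sigmaInt_eq_sliceIntegral hφa]
  rw [mul_sub, ← intervalIntegral.integral_const_mul]
  refine congrArg (· - _) (intervalIntegral.integral_congr fun b hb => ?_)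
  have hb0 : 0 ≤ b := (Set.uIcc_of_le ha ▸ hb).1
  simp only [derivWithin_const_mul_field, (hS b).derivWithin (uniqueDiffOn_Ici 0 b hb0)]
  ring

theorem ibp_wetting_strip_general {n : ℕ} {a : ℝ} (ha : 0 ≤ a)
    (hφa_meas : Measurable φa) (hφa_bdd : BddAbove (Set.range φa))
    (hφa_supp : ∀ x, a < x → φa x = 0)
    (hZ : Z = ∫ φ, gaussianWeight φ * ∏ i, Real.exp (φa (φ i))
        ∂(Measure.pi fun _ : Fin (n + 1) => (volume : Measure ℝ).restrict (Set.Ici 0)))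
    {f : (Fin (n + 1) → ℝ) → ℝ} (hf : ContDiff ℝ 1 f) (hf' : HasPolynomialGrowth (fderiv ℝ f))
    (h : Fin (n + 1) → ℝ) :
    (∀ i : Fin (n + 1), ContDiffOn ℝ 1 (fun b => sigmaInt (n + 1) φa Z i f b) (Set.Ici 0)) ∧
    ∫ φ, fderiv ℝ f φ h ∂(wettingMeasure (n + 1) φa Z) =
      (∑ i : Fin (n + 1), h i *
        ((∫ b in (0 : ℝ)..a, Real.exp (φa b) *
            derivWithin (fun c => sigmaInt (n + 1) φa Z i f c) (Set.Ici 0) b)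
          - sigmaInt (n + 1) φa Z i f a))
      - ∫ φ, f φ *
          ((∑ i : Fin (n + 1), φ i * (pad h (i.1 + 2) + pad h i.1 - 2 * pad h (i.1 + 1)))
            + φ (Fin.last n) * h (Fin.last n))
        ∂(wettingMeasure (n + 1) φa Z) := by
  have hμ := integratesGaussians_stripMeasure hφa_meas hφa_bdd
  have hfd := hf.differentiable one_ne_zero
  have hF : ContDiff ℝ 1 fun φ => f φ * gaussianWeight φ := hf.mul contDiff_gaussianWeight
  have hFb := (HasPolynomialGrowth.of_fderiv hfd hf').gaussianBounded_mul_gaussianWeight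
  have hF'b := gaussianBounded_fderiv_mul_gaussianWeight hfd hf'
  have hS (i : Fin (n + 1)) := contDiff_one_sliceIntegral i hF hFb hF'b hμ
  have hσ (i : Fin (n + 1)) := funext (sigmaInt_eq_sliceIntegral (Z := Z) hφa_meas i f)
  refine ⟨fun i => hσ i ▸ (contDiff_const.mul (hS i)).contDiffOn, ?_⟩
  have hZ0 : 0 ≤ Z := hZ ▸ integral_nonneg fun φ =>
    mul_nonneg (gaussianWeight_pos φ).le (Finset.prod_nonneg fun i _ => Real.exp_nonneg _)
  have hboundary (i : Fin (n + 1)) := integral_mul_derivWithin_sigmaInt_sub (Z := Z) hφa_meas ha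
    ((hS i).differentiable one_ne_zero)
  have hgreen (φ : Fin (n + 1) → ℝ) := neg_dirichletForm_eq_sum_laplacian φ h
  rw [integral_wettingMeasure hφa_meas hZ0, integral_wettingMeasure hφa_meas hZ0,
    integral_fderiv_mul_gaussianWeight hμ hf hf' h, mul_sub,
    integral_fderiv_pi_stripMeasure hφa_meas hφa_bdd ha hφa_supp hF hFb hF'b, Finset.mul_sum]
  simp only [hboundary, hgreen, mul_left_comm Z⁻¹]

end WettingMeasure

/-- Integration by parts formula for the wetting measure with a strip, with the correct
free-endpoint boundary term `φ_N h_N` (here `h ⟨i-1,_⟩` is the paper's `h_i` for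
`1 ≤ i ≤ N`, and `pad h` realizes the conventions `h_0 = h_{N+1} = 0`). -/
theorem ibp_wetting_strip (N : ℕ) (hN : 1 ≤ N) (a : ℝ) (ha : 0 < a)
    (φa : ℝ → ℝ) (hφa_smooth : ContDiff ℝ (⊤ : ℕ∞) φa) (hφa_nonneg : ∀ x, 0 ≤ φa x)
    (hφa_supp : ∀ x, x ∉ Set.Icc 0 a → φa x = 0)
    (Z : ℝ)
    (hZ : Z = ∫ φ, gaussianWeight φ * ∏ i, Real.exp (φa (φ i))
        ∂(Measure.pi fun _ : Fin N => (volume : Measure ℝ).restrict (Set.Ici 0)))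
    (f : (Fin N → ℝ) → ℝ) (hf : ContDiff ℝ 1 f)
    (hf' : ∃ C, ∀ φ, ‖fderiv ℝ f φ‖ ≤ C)
    (h : Fin N → ℝ) :
    (∀ i : Fin N, ContDiffOn ℝ 1 (fun b => sigmaInt N φa Z i f b) (Set.Ici 0)) ∧
    ∫ φ, fderiv ℝ f φ h ∂(wettingMeasure N φa Z) =
      (∑ i : Fin N, h i *
        ((∫ b in (0 : ℝ)..a, Real.exp (φa b) *
            derivWithin (fun c => sigmaInt N φa Z i f c) (Set.Ici 0) b)
          - sigmaInt N φa Z i f a))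
      - ∫ φ, f φ *
          ((∑ i : Fin N, φ i * (pad h (i.1 + 2) + pad h i.1 - 2 * pad h (i.1 + 1)))
            + φ ⟨N - 1, by omega⟩ * h ⟨N - 1, by omega⟩)
        ∂(wettingMeasure N φa Z) := by
  obtain ⟨n, rfl⟩ := Nat.exists_eq_add_of_le' hN
  obtain ⟨C, hC⟩ := hf'
  have hbdd := hφa_smooth.continuous.bddAbove_range_of_hasCompactSupport
    (.intro isCompact_Icc fun {x} => hφa_supp x)
  exact ibp_wetting_strip_general ha.le hφa_smooth.continuous.measurable hbdd
    (fun x hx => hφa_supp x fun hmem => hx.not_ge hmem.2) hZ hf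
    (hasPolynomialGrowth_of_norm_le hC) h
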